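/- (Theorem H_d) Assume F_k(x) = V_k D_k(x) V_k^{-1} with D_k(x) block diagonal with blocks A_k(x) ∈ ℝ^{p×p}, B_k(x) ∈ ℝ^{q×q}; assume ∑_{i=1}^∞ ‖[A_k^i(x)]^{-1}‖₂ ≤ α_k, ∑_{i=0}^{n−1} ‖B_k^i(f_k^{n−i}(x))‖₂ ≤ β_k for all n, and ‖∂f_k/∂k‖₂ ≤ M. Then for every N ≥ 1 the largest eigenvalue of the covariance matrix Γ̃_N(x,k) satisfies λ̃_N^{(d+1)}(x,k) ≥ (‖V_k^{(p)}L(x,k)‖₂² + 1) / ((M‖V_k‖₂‖V_k^{-1}‖₂)²(α_k² + β_k²)(N+1)). -/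

import Mathlib

open Matrix

/-- The operator norm on real matrices induced by the Euclidean (ℓ²) norm. -/
noncomputable def opNorm {n : Type*} [Fintype n] [DecidableEq n]
    (P : Matrix n n ℝ) : ℝ :=
  ‖(Matrix.toEuclideanCLM (𝕜 := ℝ) P : EuclideanSpace ℝ n →L[ℝ] EuclideanSpace ℝ n)‖

/-- The Euclidean norm of a vector. -/
noncomputable def vnorm {n : Type*} [Fintype n] (v : n → ℝ) : ℝ :=
  Real.sqrt (∑ i, v i ^ 2)

/-- The Jacobian cocycle `F_k^n(x)`: the product of the one-step Jacobians `F = F_k`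
along the orbit of `x` under `f = f_k`, latest on the left. -/
def jacCoc {X : Type*} {n : Type*} [Fintype n] [DecidableEq n]
    (F : X → Matrix n n ℝ) (f : X → X) (x : X) : ℕ → Matrix n n ℝ
  | 0 => 1
  | (m + 1) => F (f^[m] x) * jacCoc F f x m

/-- The derivative `∂f_k^n/∂k(x)`, defined by the recursion
`∂f_k^{n+1}/∂k(x) = F_k(f_k^n(x)) ∂f_k^n/∂k(x) + ∂f_k/∂k(f_k^n(x))`; equivalently
`∂f_k^n/∂k(x) = ∑_{i=0}^{n-1} F_k^i(f_k^{n-i}(x)) ∂f_k/∂k(f_k^{n-1-i}(x))`. -/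
def parDer {X : Type*} {n : Type*} [Fintype n] [DecidableEq n]
    (F : X → Matrix n n ℝ) (f : X → X) (w : X → n → ℝ) (x : X) : ℕ → n → ℝ
  | 0 => 0
  | (m + 1) => (F (f^[m] x)).mulVec (parDer F f w x m) + w (f^[m] x)

/-- The augmented Jacobian `F̃_k^n(x) = [F_k^n(x) | ∂f_k^n/∂k(x)]`. -/
def augment {n : Type*} (F : Matrix n n ℝ) (w : n → ℝ) : Matrix n (n ⊕ Unit) ℝ :=
  Matrix.of fun i j => Sum.elim (fun j' => F i j') (fun _ => w i) j

/-- The normal matrix `C̃_N(x,k) = ∑_{n=0}^N F̃_k^n(x)ᵀ F̃_k^n(x)`. -/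
noncomputable def normalMatrix {X : Type*} {n : Type*} [Fintype n] [DecidableEq n]
    (F : X → Matrix n n ℝ) (f : X → X) (w : X → n → ℝ) (x : X) (N : ℕ) :
    Matrix (n ⊕ Unit) (n ⊕ Unit) ℝ :=
  ∑ m ∈ Finset.range (N + 1),
    (augment (jacCoc F f x m) (parDer F f w x m))ᵀ * augment (jacCoc F f x m) (parDer F f w x m)

/-- The two-parameter cocycle `twoCoc G m i = A_k^i(f_k^m(x))` built from the one-step
matrices `G j = A_k(f_k^j(x))`, latest on the left. -/
def twoCoc {n : Type*} [Fintype n] [DecidableEq n] (G : ℕ → Matrix n n ℝ) :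
    ℕ → ℕ → Matrix n n ℝ
  | _, 0 => 1
  | m, (i + 1) => G (m + i) * twoCoc G m i

/-!
Let `ω = V⁻¹ w`, with components `ω¹` and `ω²`. In the coordinates given by `V`, the vector
`∂f^m/∂k - F^m V^{(p)} L` has first component
`-L(f^m x) = -∑_{i ≥ 1} [A^i(f^m x)]⁻¹ ω¹(f^{m+i-1} x)`: both `m ↦ -L(f^m x)` and the first
component of `V⁻¹ ∂f^m/∂k` solve `s (m + 1) = A s m + ω¹`, so their difference is `A^m L`. Its
second component is a sum of terms `B^i ω²`. Both components are bounded uniformly in `m`, by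
`α ‖V⁻¹‖ M` and `β ‖V⁻¹‖ M`. So `u = (-V^{(p)} L, 1)` satisfies `‖F̃^m u‖² ≤ K` for all `m`, with
`K = (M ‖V‖ ‖V⁻¹‖)² (α² + β²)`, whence `uᵀ C̃_N u ≤ K (N + 1)`. The Rayleigh quotient of `u` then
bounds the least eigenvalue of `C̃_N` from above, that is, the largest eigenvalue of `C̃_N⁻¹` from
below.
-/

section EuclideanNorms

variable {n ι : Type*} [Fintype n]

lemma vnorm_eq_norm_toLp (v : n → ℝ) : vnorm v = ‖WithLp.toLp 2 v‖ := by
  simp [vnorm, EuclideanSpace.norm_eq]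

lemma vnorm_nonneg (v : n → ℝ) : 0 ≤ vnorm v := Real.sqrt_nonneg _

lemma vnorm_sq (v : n → ℝ) : vnorm v ^ 2 = v ⬝ᵥ v := by
  simp [vnorm, dotProduct, ← sq, Real.sq_sqrt, Finset.sum_nonneg, sq_nonneg]

lemma vnorm_neg (v : n → ℝ) : vnorm (-v) = vnorm v := by
  simp [vnorm]

lemma continuous_vnorm : Continuous (vnorm : (n → ℝ) → ℝ) := by
  unfold vnorm
  fun_prop

lemma vnorm_sum_le (s : Finset ι) (g : ι → n → ℝ) :
    vnorm (∑ i ∈ s, g i) ≤ ∑ i ∈ s, vnorm (g i) := by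
  simpa only [vnorm_eq_norm_toLp, WithLp.toLp_sum] using norm_sum_le _ _

lemma abs_apply_le_vnorm (v : n → ℝ) (j : n) : |v j| ≤ vnorm v := by
  simpa only [vnorm_eq_norm_toLp, Real.norm_eq_abs] using PiLp.norm_apply_le (WithLp.toLp 2 v) j

lemma vnorm_sumElim_sq {m : Type*} [Fintype m] (v : m → ℝ) (w : n → ℝ) :
    vnorm (Sum.elim v w) ^ 2 = vnorm v ^ 2 + vnorm w ^ 2 := by
  simp only [vnorm_sq, sumElim_dotProduct_sumElim]

lemma vnorm_comp_le_of_injective {m : Type*} [Fintype m] {e : m → n} (he : e.Injective)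
    (v : n → ℝ) : vnorm (v ∘ e) ≤ vnorm v := by
  refine Real.sqrt_le_sqrt ?_
  calc ∑ i, (v ∘ e) i ^ 2
    _ = ∑ j ∈ Finset.univ.map ⟨e, he⟩, v j ^ 2 :=
        (Finset.sum_map Finset.univ ⟨e, he⟩ fun j => v j ^ 2).symm
    _ ≤ ∑ j, v j ^ 2 := Finset.sum_le_univ_sum_of_nonneg fun _ => sq_nonneg _

variable [DecidableEq n]

lemma opNorm_nonneg (P : Matrix n n ℝ) : 0 ≤ opNorm P := norm_nonneg _

lemma vnorm_mulVec_le (P : Matrix n n ℝ) (v : n → ℝ) : vnorm (P *ᵥ v) ≤ opNorm P * vnorm v := by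
  simpa [vnorm_eq_norm_toLp, opNorm] using
    (toEuclideanCLM (𝕜 := ℝ) P).le_opNorm (WithLp.toLp 2 v)

lemma vnorm_mulVec_le_of_le (P : Matrix n n ℝ) {v : n → ℝ} {c : ℝ} (hv : vnorm v ≤ c) :
    vnorm (P *ᵥ v) ≤ opNorm P * c :=
  (vnorm_mulVec_le P v).trans (mul_le_mul_of_nonneg_left hv (opNorm_nonneg P))

variable {P : ι → Matrix n n ℝ} {g : ι → n → ℝ} {c : ℝ}

lemma vnorm_sum_mulVec_le (s : Finset ι) (hg : ∀ i ∈ s, vnorm (g i) ≤ c) :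
    vnorm (∑ i ∈ s, P i *ᵥ g i) ≤ (∑ i ∈ s, opNorm (P i)) * c :=
  calc vnorm (∑ i ∈ s, P i *ᵥ g i)
    _ ≤ ∑ i ∈ s, vnorm (P i *ᵥ g i) := vnorm_sum_le _ _
    _ ≤ ∑ i ∈ s, opNorm (P i) * c :=
        Finset.sum_le_sum fun i hi => vnorm_mulVec_le_of_le (P i) (hg i hi)
    _ = (∑ i ∈ s, opNorm (P i)) * c := (Finset.sum_mul ..).symm

lemma summable_mulVec (hP : Summable fun i => opNorm (P i)) (hg : ∀ i, vnorm (g i) ≤ c) :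
    Summable fun i => P i *ᵥ g i :=
  Pi.summable.2 fun j => (hP.mul_right c).of_norm_bounded fun i =>
    (abs_apply_le_vnorm _ j).trans (vnorm_mulVec_le_of_le (P i) (hg i))

lemma vnorm_tsum_mulVec_le (hP : Summable fun i => opNorm (P i)) (hg : ∀ i, vnorm (g i) ≤ c) :
    vnorm (∑' i, P i *ᵥ g i) ≤ (∑' i, opNorm (P i)) * c :=
  le_of_tendsto_of_tendsto' ((continuous_vnorm.tendsto _).comp (summable_mulVec hP hg).hasSum)
    (hP.hasSum.mul_const c) fun s => vnorm_sum_mulVec_le s fun i _ => hg i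

end EuclideanNorms

section ForcedRecurrence

variable {n : Type*} [Fintype n]

/-- The solution of the forced linear recurrence `s (m + 1) = G m *ᵥ s m + g m` with `s 0 = 0`.
Along an orbit, `G` is the sequence of Jacobians, `g` the sequence of parameter derivatives, and
the solution is `∂f_k^m/∂k(x)`. -/
def forcedOrbit (G : ℕ → Matrix n n ℝ) (g : ℕ → n → ℝ) : ℕ → n → ℝ
  | 0 => 0
  | m + 1 => G m *ᵥ forcedOrbit G g m + g m

variable [DecidableEq n]

/-- The vector `L(f_k^m(x), k) = ∑_{i ≥ 1} [A_k^i(f_k^m(x))]⁻¹ ω¹(f_k^{m+i-1}(x))` of the paper,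
for `G` the sequence of blocks `A_k` and `g` the sequence of forcing terms `ω¹` along the orbit
of `x`. The summation index is shifted to start at `0`. -/
noncomputable def unstableSum (G : ℕ → Matrix n n ℝ) (g : ℕ → n → ℝ) (m : ℕ) : n → ℝ :=
  ∑' i, (twoCoc G m (i + 1))⁻¹ *ᵥ g (m + i)

variable {G : ℕ → Matrix n n ℝ} {g : ℕ → n → ℝ} {b c : ℝ}

lemma twoCoc_succ_right (G : ℕ → Matrix n n ℝ) (m i : ℕ) :
    twoCoc G m (i + 1) = twoCoc G (m + 1) i * G m := by
  induction i with
  | zero => simp [twoCoc]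
  | succ i ih =>
    rw [twoCoc, ih, twoCoc, Matrix.mul_assoc, Nat.add_right_comm m 1 i, Nat.add_assoc m i 1]

lemma forcedOrbit_eq_sum (G : ℕ → Matrix n n ℝ) (g : ℕ → n → ℝ) (m : ℕ) :
    forcedOrbit G g m = ∑ i ∈ Finset.range m, twoCoc G (m - i) i *ᵥ g (m - 1 - i) := by
  induction m with
  | zero => simp [forcedOrbit]
  | succ m ih =>
    have shift : ∀ i ∈ Finset.range m, G m *ᵥ twoCoc G (m - i) i *ᵥ g (m - 1 - i) =
        twoCoc G (m + 1 - (i + 1)) (i + 1) *ᵥ g (m + 1 - 1 - (i + 1)) := by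
      intro i hi
      have hi : m - i + i = m := Nat.sub_add_cancel (Finset.mem_range.1 hi).le
      rw [Nat.add_sub_add_right, twoCoc, hi, mulVec_mulVec, Nat.add_sub_cancel, Nat.sub_sub,
        Nat.add_comm 1 i]
    rw [forcedOrbit, ih, mulVec_sum, Finset.sum_congr rfl shift, Finset.sum_range_succ']
    simp [twoCoc]

lemma vnorm_forcedOrbit_le (hg : ∀ i, vnorm (g i) ≤ c) {m : ℕ}
    (hG : ∑ i ∈ Finset.range m, opNorm (twoCoc G (m - i) i) ≤ b) :
    vnorm (forcedOrbit G g m) ≤ b * c := by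
  rw [forcedOrbit_eq_sum]
  exact (vnorm_sum_mulVec_le _ fun i _ => hg _).trans
    (mul_le_mul_of_nonneg_right hG ((vnorm_nonneg _).trans (hg 0)))

lemma vnorm_unstableSum_le (hg : ∀ i, vnorm (g i) ≤ c) {m : ℕ}
    (hG : ∀ k, ∑ i ∈ Finset.range k, opNorm (twoCoc G m (i + 1))⁻¹ ≤ b) :
    vnorm (unstableSum G g m) ≤ b * c := by
  have hnonneg (i : ℕ) : 0 ≤ opNorm (twoCoc G m (i + 1))⁻¹ := opNorm_nonneg _
  calc vnorm (unstableSum G g m)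
    _ ≤ (∑' i, opNorm (twoCoc G m (i + 1))⁻¹) * c :=
        vnorm_tsum_mulVec_le (summable_of_sum_range_le hnonneg hG) fun _ => hg _
    _ ≤ b * c := mul_le_mul_of_nonneg_right (Real.tsum_le_of_sum_range_le hnonneg hG)
        ((vnorm_nonneg _).trans (hg 0))

lemma mulVec_unstableSum {m : ℕ} (hG : IsUnit (G m))
    (hsum : Summable fun i => (twoCoc G m (i + 1))⁻¹ *ᵥ g (m + i)) :
    G m *ᵥ unstableSum G g m = g m + unstableSum G g (m + 1) := by
  have hdet := (isUnit_iff_isUnit_det _).1 hG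
  have cancel (i : ℕ) : G m *ᵥ (twoCoc G m (i + 1))⁻¹ *ᵥ g (m + i) =
      (twoCoc G (m + 1) i)⁻¹ *ᵥ g (m + i) := by
    rw [twoCoc_succ_right, Matrix.mul_inv_rev, mulVec_mulVec, mul_nonsing_inv_cancel_left _ _ hdet]
  have hmap := hsum.map_tsum (G m).mulVecLin (by fun_prop)
  have hsum' := hsum.map (G m).mulVecLin (by fun_prop)
  simp only [Function.comp_def, mulVecLin_apply, cancel] at hmap hsum'
  rw [unstableSum, hmap, hsum'.tsum_eq_zero_add]
  simp [unstableSum, twoCoc, Nat.add_assoc, Nat.add_comm 1]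

lemma twoCoc_mulVec_unstableSum (hG : ∀ m, IsUnit (G m))
    (hsum : ∀ m, Summable fun i => (twoCoc G m (i + 1))⁻¹ *ᵥ g (m + i)) (m : ℕ) :
    twoCoc G 0 m *ᵥ unstableSum G g 0 = forcedOrbit G g m + unstableSum G g m := by
  induction m with
  | zero => simp [twoCoc, forcedOrbit]
  | succ m ih =>
    rw [twoCoc, Nat.zero_add, ← mulVec_mulVec, ih, mulVec_add, mulVec_unstableSum (hG m) (hsum m),
      forcedOrbit, add_assoc]

lemma vnorm_forcedOrbit_sub_le (hG : ∀ m, IsUnit (G m)) (hg : ∀ i, vnorm (g i) ≤ c)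
    (hb : ∀ m k, ∑ i ∈ Finset.range k, opNorm (twoCoc G m (i + 1))⁻¹ ≤ b) (m : ℕ) :
    vnorm (forcedOrbit G g m - twoCoc G 0 m *ᵥ unstableSum G g 0) ≤ b * c := by
  have hsum (m : ℕ) : Summable fun i => (twoCoc G m (i + 1))⁻¹ *ᵥ g (m + i) :=
    summable_mulVec (summable_of_sum_range_le (fun _ => opNorm_nonneg _) (hb m)) fun _ => hg _
  rw [twoCoc_mulVec_unstableSum hG hsum, sub_add_cancel_left, vnorm_neg]
  exact vnorm_unstableSum_le hg (hb m)

end ForcedRecurrence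

section BlockDiagonalization

variable {n ι κ : Type*} [Fintype n] [Fintype ι] [Fintype κ]

lemma forcedOrbit_fromBlocks (A : ℕ → Matrix ι ι ℝ) (B : ℕ → Matrix κ κ ℝ)
    (g : ℕ → ι ⊕ κ → ℝ) (m : ℕ) :
    forcedOrbit (fun j => fromBlocks (A j) 0 0 (B j)) g m =
      Sum.elim (forcedOrbit A (fun j => g j ∘ Sum.inl) m)
        (forcedOrbit B (fun j => g j ∘ Sum.inr) m) := by
  induction m with
  | zero => ext (_ | _) <;> simp [forcedOrbit]
  | succ m ih => ext (_ | _) <;> simp [forcedOrbit, ih, fromBlocks_mulVec]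

variable [DecidableEq n] [DecidableEq ι] [DecidableEq κ]

lemma twoCoc_conj {V : Matrix n n ℝ} (hV : IsUnit V) (D : ℕ → Matrix n n ℝ) (m i : ℕ) :
    twoCoc (fun j => V * D j * V⁻¹) m i = V * twoCoc D m i * V⁻¹ := by
  have hdet := (isUnit_iff_isUnit_det _).1 hV
  induction i with
  | zero => simp [twoCoc, mul_nonsing_inv _ hdet]
  | succ i ih =>
    rw [twoCoc, ih, twoCoc]
    simp only [Matrix.mul_assoc, nonsing_inv_mul_cancel_left _ _ hdet]

lemma forcedOrbit_conj {V : Matrix n n ℝ} (hV : IsUnit V) (D : ℕ → Matrix n n ℝ)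
    (g : ℕ → n → ℝ) (m : ℕ) :
    forcedOrbit (fun j => V * D j * V⁻¹) g m = V *ᵥ forcedOrbit D (fun j => V⁻¹ *ᵥ g j) m := by
  have hdet := (isUnit_iff_isUnit_det _).1 hV
  induction m with
  | zero => simp [forcedOrbit]
  | succ m ih =>
    simp only [forcedOrbit, ih, mulVec_add, mulVec_mulVec, mul_nonsing_inv _ hdet, one_mulVec,
      nonsing_inv_mul_cancel_right _ _ hdet]

lemma twoCoc_fromBlocks (A : ℕ → Matrix ι ι ℝ) (B : ℕ → Matrix κ κ ℝ) (m i : ℕ) :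
    twoCoc (fun j => fromBlocks (A j) 0 0 (B j)) m i =
      fromBlocks (twoCoc A m i) 0 0 (twoCoc B m i) := by
  induction i with
  | zero => simp [twoCoc]
  | succ i ih => simp [twoCoc, ih, fromBlocks_multiply]

variable {A : ℕ → Matrix ι ι ℝ} {B : ℕ → Matrix κ κ ℝ} {c α β : ℝ}

lemma vnorm_forcedOrbit_fromBlocks_sub_sq_le {g : ℕ → ι ⊕ κ → ℝ} (hg : ∀ j, vnorm (g j) ≤ c)
    (hA : ∀ j, IsUnit (A j))
    (hα : ∀ m k, ∑ i ∈ Finset.range k, opNorm (twoCoc A m (i + 1))⁻¹ ≤ α)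
    {m : ℕ} (hβ : ∑ i ∈ Finset.range m, opNorm (twoCoc B (m - i) i) ≤ β) :
    vnorm (forcedOrbit (fun j => fromBlocks (A j) 0 0 (B j)) g m -
      twoCoc (fun j => fromBlocks (A j) 0 0 (B j)) 0 m *ᵥ
        Sum.elim (unstableSum A (fun j => g j ∘ Sum.inl) 0) 0) ^ 2 ≤
      c ^ 2 * (α ^ 2 + β ^ 2) := by
  have hunstable := vnorm_forcedOrbit_sub_le hA
    (fun j => (vnorm_comp_le_of_injective Sum.inl_injective _).trans (hg j)) hα m
  have hstable := vnorm_forcedOrbit_le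
    (fun j => (vnorm_comp_le_of_injective Sum.inr_injective _).trans (hg j)) hβ
  rw [forcedOrbit_fromBlocks, twoCoc_fromBlocks, fromBlocks_mulVec, ← Sum.elim_sub_sub,
    vnorm_sumElim_sq]
  simp only [Sum.elim_comp_inl, Sum.elim_comp_inr, zero_mulVec, mulVec_zero, add_zero, sub_zero]
  calc _ ≤ (α * c) ^ 2 + (β * c) ^ 2 :=
        add_le_add (pow_le_pow_left₀ (vnorm_nonneg _) hunstable 2)
          (pow_le_pow_left₀ (vnorm_nonneg _) hstable 2)
    _ = c ^ 2 * (α ^ 2 + β ^ 2) := by ring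

lemma vnorm_forcedOrbit_conj_sub_sq_le {V : Matrix (ι ⊕ κ) (ι ⊕ κ) ℝ} (hV : IsUnit V)
    {w : ℕ → ι ⊕ κ → ℝ} {M : ℝ} (hw : ∀ j, vnorm (w j) ≤ M) (hA : ∀ j, IsUnit (A j))
    (hα : ∀ m k, ∑ i ∈ Finset.range k, opNorm (twoCoc A m (i + 1))⁻¹ ≤ α)
    {m : ℕ} (hβ : ∑ i ∈ Finset.range m, opNorm (twoCoc B (m - i) i) ≤ β) :
    vnorm (forcedOrbit (fun j => V * fromBlocks (A j) 0 0 (B j) * V⁻¹) w m -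
      twoCoc (fun j => V * fromBlocks (A j) 0 0 (B j) * V⁻¹) 0 m *ᵥ V *ᵥ
        Sum.elim (unstableSum A (fun j => (V⁻¹ *ᵥ w j) ∘ Sum.inl) 0) 0) ^ 2 ≤
      (M * opNorm V * opNorm V⁻¹) ^ 2 * (α ^ 2 + β ^ 2) := by
  have hdet := (isUnit_iff_isUnit_det _).1 hV
  have hblocks := vnorm_forcedOrbit_fromBlocks_sub_sq_le
    (fun j => vnorm_mulVec_le_of_le V⁻¹ (hw j)) hA hα hβ
  rw [forcedOrbit_conj hV, twoCoc_conj hV, mulVec_mulVec, nonsing_inv_mul_cancel_right _ _ hdet,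
    ← mulVec_mulVec, ← mulVec_sub]
  calc _ ≤ _ := pow_le_pow_left₀ (vnorm_nonneg _) (vnorm_mulVec_le V _) 2
    _ ≤ opNorm V ^ 2 * ((opNorm V⁻¹ * M) ^ 2 * (α ^ 2 + β ^ 2)) := by
        rw [mul_pow]
        exact mul_le_mul_of_nonneg_left hblocks (sq_nonneg _)
    _ = (M * opNorm V * opNorm V⁻¹) ^ 2 * (α ^ 2 + β ^ 2) := by ring

end BlockDiagonalization

section LeastEigenvalue

variable {n : Type*} [Fintype n] [DecidableEq n]

open scoped MatrixOrder in
lemma exists_hasEigenvalue_mul_le_dotProduct_mulVec {C : Matrix n n ℝ} (hC : C.IsHermitian)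
    {u : n → ℝ} (hu : u ≠ 0) :
    ∃ ν, Module.End.HasEigenvalue (toLin' C) ν ∧ ν * (u ⬝ᵥ u) ≤ u ⬝ᵥ C *ᵥ u := by
  have : Nonempty n := (Function.ne_iff.1 hu).nonempty
  obtain ⟨i, hi⟩ := Finite.exists_min hC.eigenvalues
  refine ⟨hC.eigenvalues i, ?_, ?_⟩
  · rw [Module.End.hasEigenvalue_iff_mem_spectrum, spectrum_toLin']
    exact hC.eigenvalues_mem_spectrum_real i
  · have hle : algebraMap ℝ (Matrix n n ℝ) (hC.eigenvalues i) ≤ C := by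
      refine algebraMap_le_of_le_spectrum (fun ν hν => ?_) hC
      obtain ⟨j, rfl⟩ := hC.spectrum_real_eq_range_eigenvalues ▸ hν
      exact hi j
    have := (le_iff.1 hle).dotProduct_mulVec_nonneg u
    simpa [sub_mulVec, Algebra.algebraMap_eq_smul_one, smul_mulVec] using this

lemma hasEigenvalue_toLin'_inv {K : Type*} [Field K] {C : Matrix n n K} (hC : IsUnit C) {ν : K}
    (hν : Module.End.HasEigenvalue (toLin' C) ν) : Module.End.HasEigenvalue (toLin' C⁻¹) ν⁻¹ := by
  obtain ⟨C, rfl⟩ := hC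
  rw [Module.End.hasEigenvalue_iff_mem_spectrum, spectrum_toLin'] at hν ⊢
  rw [← coe_units_inv]
  exact spectrum.inv₀_mem_iff.2 (by simpa using hν)

lemma exists_hasEigenvalue_inv_dotProduct_div_le {C : Matrix n n ℝ} (hC : C.PosDef) {u : n → ℝ}
    (hu : u ≠ 0) {R : ℝ} (hR : u ⬝ᵥ C *ᵥ u ≤ R) :
    ∃ μ, Module.End.HasEigenvalue (toLin' C⁻¹) μ ∧ u ⬝ᵥ u / R ≤ μ := by
  obtain ⟨ν, hν, hle⟩ := exists_hasEigenvalue_mul_le_dotProduct_mulVec hC.isHermitian hu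
  have hν0 : 0 < ν := by
    rw [Module.End.hasEigenvalue_iff_mem_spectrum, spectrum_toLin',
      hC.isHermitian.spectrum_real_eq_range_eigenvalues] at hν
    obtain ⟨i, rfl⟩ := hν
    exact hC.eigenvalues_pos i
  have hR0 : 0 < R := (by simpa using hC.dotProduct_mulVec_pos hu : 0 < u ⬝ᵥ C *ᵥ u).trans_le hR
  refine ⟨ν⁻¹, hasEigenvalue_toLin'_inv hC.isUnit hν, ?_⟩
  rw [div_le_iff₀ hR0, ← div_eq_inv_mul, le_div_iff₀' hν0]
  exact hle.trans hR

end LeastEigenvalue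

section NormalMatrix

variable {X n : Type*} [Fintype n]

lemma augment_mulVec_sumElim_neg (P : Matrix n n ℝ) (v y : n → ℝ) :
    augment P v *ᵥ Sum.elim (-y) 1 = v - P *ᵥ y := by
  have : augment P v = fromCols P (replicateCol Unit v) := by
    ext i (j | j) <;> rfl
  rw [this, fromCols_mulVec_sumElim, mulVec_neg, neg_add_eq_sub]
  congr 1
  ext i
  simp [mulVec, dotProduct]

variable [DecidableEq n] (F : X → Matrix n n ℝ) (f : X → X) (w : X → n → ℝ) (x : X)

lemma jacCoc_eq_twoCoc (m : ℕ) : jacCoc F f x m = twoCoc (fun j => F (f^[j] x)) 0 m := by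
  induction m with
  | zero => rfl
  | succ m ih => rw [jacCoc, twoCoc, ih, Nat.zero_add]

lemma parDer_eq_forcedOrbit (m : ℕ) :
    parDer F f w x m = forcedOrbit (fun j => F (f^[j] x)) (fun j => w (f^[j] x)) m := by
  induction m with
  | zero => rfl
  | succ m ih => rw [parDer, forcedOrbit, ih]

lemma dotProduct_normalMatrix_mulVec (N : ℕ) (u : n ⊕ Unit → ℝ) :
    u ⬝ᵥ normalMatrix F f w x N *ᵥ u = ∑ m ∈ Finset.range (N + 1),
      vnorm (augment (jacCoc F f x m) (parDer F f w x m) *ᵥ u) ^ 2 := by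
  simp only [normalMatrix, sum_mulVec, dotProduct_sum, vnorm_sq, ← mulVec_mulVec,
    dotProduct_mulVec u, vecMul_transpose]

end NormalMatrix

theorem theorem_Hd_general {X ι κ : Type*} [Fintype ι] [DecidableEq ι] [Fintype κ] [DecidableEq κ]
    {M α β : ℝ} {f : X → X} {x : X} {A : X → Matrix ι ι ℝ} {B : X → Matrix κ κ ℝ}
    {V : Matrix (ι ⊕ κ) (ι ⊕ κ) ℝ} (hV : IsUnit V) {F : X → Matrix (ι ⊕ κ) (ι ⊕ κ) ℝ}
    (hF : ∀ j, F (f^[j] x) = V * fromBlocks (A (f^[j] x)) 0 0 (B (f^[j] x)) * V⁻¹)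
    {w : X → ι ⊕ κ → ℝ} (hM : ∀ j, vnorm (w (f^[j] x)) ≤ M) (hA : ∀ j, IsUnit (A (f^[j] x)))
    (hα : ∀ m k, ∑ i ∈ Finset.range k, opNorm (twoCoc (fun j => A (f^[j] x)) m (i + 1))⁻¹ ≤ α)
    (hβ : ∀ m, ∑ i ∈ Finset.range m, opNorm (twoCoc (fun j => B (f^[j] x)) (m - i) i) ≤ β)
    {L : ι → ℝ} (hL : L = ∑' i, (twoCoc (fun j => A (f^[j] x)) 0 (i + 1))⁻¹ *ᵥ
      ((V⁻¹ *ᵥ w (f^[i] x)) ∘ Sum.inl))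
    {N : ℕ} (hC : (normalMatrix F f w x N).PosDef) :
    ∃ μ, Module.End.HasEigenvalue (toLin' (normalMatrix F f w x N)⁻¹) μ ∧
      (vnorm (V.toCols₁ *ᵥ L) ^ 2 + 1) /
        ((M * opNorm V * opNorm V⁻¹) ^ 2 * (α ^ 2 + β ^ 2) * (N + 1)) ≤ μ := by
  set K := (M * opNorm V * opNorm V⁻¹) ^ 2 * (α ^ 2 + β ^ 2)
  set u : (ι ⊕ κ) ⊕ Unit → ℝ := Sum.elim (-(V.toCols₁ *ᵥ L)) 1
  have hu : u ≠ 0 := fun h => one_ne_zero (congrFun h (Sum.inr ()))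
  have hVL : V.toCols₁ *ᵥ L = V *ᵥ Sum.elim L 0 := by
    rw [← fromCols_toCols V, fromCols_mulVec_sumElim, toCols₁_fromCols, mulVec_zero, add_zero]
  have hLsum : L = unstableSum (fun j => A (f^[j] x))
      (fun j => (V⁻¹ *ᵥ w (f^[j] x)) ∘ Sum.inl) 0 := by
    simp only [hL, unstableSum, Nat.zero_add]
  have hbound (m : ℕ) : vnorm (augment (jacCoc F f x m) (parDer F f w x m) *ᵥ u) ^ 2 ≤ K := by
    rw [augment_mulVec_sumElim_neg, hVL, jacCoc_eq_twoCoc, parDer_eq_forcedOrbit, hLsum]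
    simp only [hF]
    exact vnorm_forcedOrbit_conj_sub_sq_le hV hM hA hα (hβ m)
  have hquad : u ⬝ᵥ normalMatrix F f w x N *ᵥ u ≤ K * (N + 1) := by
    rw [dotProduct_normalMatrix_mulVec]
    refine (Finset.sum_le_sum fun m _ => hbound m).trans_eq ?_
    simp [mul_comm]
  have huu : u ⬝ᵥ u = vnorm (V.toCols₁ *ᵥ L) ^ 2 + 1 := by
    simp [u, vnorm_sq]
  rw [← huu]
  exact exists_hasEigenvalue_inv_dotProduct_div_le hC hu hquad

/-- **Theorem H_d.** Assume `F_k(y) = V_k D_k(y) V_k⁻¹` with `D_k(y)` block diagonal with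
blocks `A_k(y) ∈ ℝ^{p×p}` and `B_k(y) ∈ ℝ^{q×q}`; assume `∑_{i=1}^∞ ‖[A_k^i(y)]⁻¹‖₂ ≤ α`
along the orbit, `∑_{i=0}^{n-1} ‖B_k^i(f_k^{n-i}(x))‖₂ ≤ β` for all `n`, and
`‖∂f_k/∂k‖₂ ≤ M`. Then for every `N ≥ 1` the largest eigenvalue of the covariance matrix
`Γ̃_N(x,k) = C̃_N(x,k)⁻¹` is at least
`(‖V_k^{(p)} L(x,k)‖₂² + 1) / ((M ‖V_k‖₂ ‖V_k⁻¹‖₂)² (α² + β²) (N+1))`, where `L(x,k)` is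
the limit `∑_{i=1}^∞ [A_k^i(x)]⁻¹ ω¹(f_k^{i-1}(x))` and `ω¹` is the `ℝ^p`-component of
`V_k⁻¹ ∂f_k/∂k`. -/
theorem theorem_Hd {p q : ℕ} (M α β : ℝ) (hM0 : 0 < M) (hα0 : 0 < α) (hβ0 : 0 < β)
    (f : ((Fin p ⊕ Fin q) → ℝ) → ((Fin p ⊕ Fin q) → ℝ))
    (A : ((Fin p ⊕ Fin q) → ℝ) → Matrix (Fin p) (Fin p) ℝ)
    (B : ((Fin p ⊕ Fin q) → ℝ) → Matrix (Fin q) (Fin q) ℝ)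
    (V : Matrix (Fin p ⊕ Fin q) (Fin p ⊕ Fin q) ℝ) (hV : IsUnit V)
    (F : ((Fin p ⊕ Fin q) → ℝ) → Matrix (Fin p ⊕ Fin q) (Fin p ⊕ Fin q) ℝ)
    (hF : ∀ y, F y = V * Matrix.fromBlocks (A y) 0 0 (B y) * V⁻¹)
    (w : ((Fin p ⊕ Fin q) → ℝ) → ((Fin p ⊕ Fin q) → ℝ))
    (hM : ∀ y, vnorm (w y) ≤ M)
    (x : (Fin p ⊕ Fin q) → ℝ)
    (hAinv : ∀ m i : ℕ, IsUnit (twoCoc (fun j => A (f^[j] x)) m i))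
    (hα : ∀ m mm : ℕ,
      ∑ i ∈ Finset.range mm, opNorm ((twoCoc (fun j => A (f^[j] x)) m (i + 1))⁻¹) ≤ α)
    (hβ : ∀ n : ℕ,
      ∑ i ∈ Finset.range n, opNorm (twoCoc (fun j => B (f^[j] x)) (n - i) i) ≤ β)
    (L : Fin p → ℝ)
    (hL : L = ∑' i : ℕ, ((twoCoc (fun j => A (f^[j] x)) 0 (i + 1))⁻¹).mulVec
      (fun j' => V⁻¹.mulVec (w (f^[i] x)) (Sum.inl j')))
    (N : ℕ) (hN : 1 ≤ N)
    (hpos : (normalMatrix F f w x N).PosDef) :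
    ∃ μ : ℝ, Module.End.HasEigenvalue (Matrix.toLin' (normalMatrix F f w x N)⁻¹) μ ∧
      (vnorm ((Matrix.of fun i j' => V i (Sum.inl j')).mulVec L) ^ 2 + 1) /
        ((M * opNorm V * opNorm V⁻¹) ^ 2 * (α ^ 2 + β ^ 2) * (N + 1)) ≤ μ :=
  theorem_Hd_general hV (fun _ => hF _) (fun _ => hM _)
    (fun j => by simpa [twoCoc] using hAinv j 1) hα hβ hL hpos
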